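/- arXiv:1405.1476 — 2 statements merged into one kernel-verified Lean document; each statement's English description precedes it below -/
import Mathlib

section
/- Every planar 3-tree admits an intersection representation in which every vertex is represented by an axis-aligned L-shape of type ⌐ rotated (i.e., the union of a vertical segment and a horizontal segment meeting at the lower-left corner), such that two vertices are adjacent if and only if their L-shapes intersect. -/
/-- An axis-aligned L-shape: union of a vertical segment `[(x,y),(x,y+h)]` and a
horizontal segment `[(x,y),(x+w,y)]` sharing the bottom-left endpoint `(x,y)`. -/
def LShape (x y w h : ℝ) : Set (ℝ × ℝ) :=
  segment ℝ (x, y) (x, y + h) ∪ segment ℝ (x, y) (x + w, y)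

/-- `G` has an `{L}`-representation: every vertex gets an L-shape (all of the same
rotation), and two distinct vertices are adjacent iff their L-shapes intersect. -/
def HasLRep {V : Type*} (G : SimpleGraph V) : Prop :=
  ∃ p : V → ℝ × ℝ × ℝ × ℝ,
    (∀ v, 0 < (p v).2.2.1 ∧ 0 < (p v).2.2.2) ∧
    ∀ u v : V, u ≠ v →
      (G.Adj u v ↔
        (LShape (p u).1 (p u).2.1 (p u).2.2.1 (p u).2.2.2 ∩
          LShape (p v).1 (p v).2.1 (p v).2.2.1 (p v).2.2.2).Nonempty)

/-- `IsKTreeBase k b G`: the vertices of `G` can be linearly ordered so that the first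
`b` vertices form a clique, and every later vertex `v` has exactly `k` earlier
neighbours, which form a `k`-clique of `G`.  With `k = 3`, `b = 4` this is the
recursive definition of a 3-tree (start from `K₄`, repeatedly add a vertex whose
neighbourhood is a triangle); with `k = 2`, `b = 2` it is the definition of a 2-tree
built from an edge. -/
def IsKTreeBase (k b : ℕ) {V : Type*} (G : SimpleGraph V) : Prop :=
  b ≤ Nat.card V ∧
  ∃ r : V ≃ Fin (Nat.card V),
    (∀ u v : V, u ≠ v → (r u : ℕ) < b → (r v : ℕ) < b → G.Adj u v) ∧
    (∀ v : V, b ≤ (r v : ℕ) → ∃ S : Finset V,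
      S.card = k ∧ (∀ u ∈ S, (r u : ℕ) < (r v : ℕ)) ∧
      (∀ a ∈ S, ∀ c ∈ S, a ≠ c → G.Adj a c) ∧
      (∀ u : V, (r u : ℕ) < (r v : ℕ) → (G.Adj u v ↔ u ∈ S)))

/-- A 3-tree: obtained from `K₄` by repeatedly adding a vertex adjacent to the three
vertices of an existing triangle. -/
def IsThreeTree {V : Type*} (G : SimpleGraph V) : Prop :=
  IsKTreeBase 3 4 G

/-- A topological plane embedding of a simple graph: vertices are distinct points,
each edge is a simple arc between the points of its endpoints, arcs meet vertex
points only at their own endpoints, and two distinct arcs can only meet in points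
that are vertex points (hence shared endpoints). -/
def SimpleGraph.IsPlanar {V : Type*} (G : SimpleGraph V) : Prop :=
  ∃ (pos : V → ℝ × ℝ) (arc : G.edgeSet → ℝ → ℝ × ℝ),
    Function.Injective pos ∧
    (∀ e, ContinuousOn (arc e) (Set.Icc 0 1)) ∧
    (∀ e, Set.InjOn (arc e) (Set.Icc 0 1)) ∧
    (∀ e : G.edgeSet, ∀ u v : V, (e : Sym2 V) = s(u, v) →
      (arc e 0 = pos u ∧ arc e 1 = pos v) ∨ (arc e 0 = pos v ∧ arc e 1 = pos u)) ∧
    (∀ e : G.edgeSet, ∀ v : V, ∀ t ∈ Set.Icc (0 : ℝ) 1,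
      arc e t = pos v → v ∈ (e : Sym2 V)) ∧
    (∀ e f : G.edgeSet, e ≠ f → ∀ s ∈ Set.Icc (0 : ℝ) 1, ∀ t ∈ Set.Icc (0 : ℝ) 1,
      arc e s = arc f t → ∃ v : V, arc e s = pos v)

/-!
Planarity is used only through the exclusion of `K₃,₃`: a triangle has at most two common
neighbours, as if each of its two sides could receive at most one later vertex.

The L-shapes are inserted one by one. Every triangle keeps one plane region for each of its sides
that is still empty; these regions are pairwise disjoint, and each of them meets no L-shapes but
those of its triangle, which cross it in one of three standard patterns. A new vertex attached to a
triangle gets an L-shape inside one of the regions of that triangle, meeting its three L-shapes, and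
the rest of the region contains standard regions for the three new triangles.

For the exclusion of `K₃,₃` no Jordan curve theorem is needed. If `γ` and `δ` are disjoint plane
paths, then `γ s - δ t` has a continuous logarithm on the square, which relates the angles swept by
each path as seen from the ends of the other. For disjoint paths from `a 0`, `a 1`, `a 2` to
`b 0`, `b 1`, `b 2`, adding up these relations contradicts the fact that `a i - a k` and
`a k - a i` have opposite signs for each of the three pairs.
-/

/-! ### Exclusion of `K₃,₃` -/

section Topology

/-- The increment over `[0, 1]` of a continuous logarithm of `g`, a junk value if there is none. -/
noncomputable def logIncrement (g : ℝ → ℂ) : ℂ :=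
  Classical.epsilon fun δ =>
    ∃ L : ℝ → ℂ, Continuous L ∧ (∀ t, Complex.exp (L t) = g t) ∧ L 1 - L 0 = δ

lemma sub_eq_sub_of_exp_eq {X : Type*} [TopologicalSpace X] [PreconnectedSpace X] {L M : X → ℂ}
    (hL : Continuous L) (hM : Continuous M) (h : ∀ x, Complex.exp (L x) = Complex.exp (M x))
    (x y : X) : L x - L y = M x - M y := by
  have hconst : L = fun z => M z + (L y - M y) := by
    refine Complex.isCoveringMap_exp.eq_of_comp_eq hL (by fun_prop) ?_ y (by ring)
    ext z
    simp [Complex.exp_add, Complex.exp_sub, h]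
  linear_combination congrFun hconst x

lemma exists_continuous_log {X : Type*} [TopologicalSpace X] [SimplyConnectedSpace X]
    [LocallyPathConnectedSpace X] {g : X → ℂ} (hg : Continuous g) (h0 : ∀ x, g x ≠ 0) :
    ∃ L : X → ℂ, Continuous L ∧ ∀ x, Complex.exp (L x) = g x := by
  obtain ⟨x₀⟩ : Nonempty X := inferInstance
  obtain ⟨L, ⟨-, hL⟩, -⟩ := Complex.isCoveringMapOn_exp.existsUnique_continuousMap_lifts
    ⟨g, hg⟩ (Complex.exp_log (h0 x₀)) h0
  exact ⟨L, L.continuous, congrFun hL⟩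

lemma logIncrement_eq {g L : ℝ → ℂ} (hL : Continuous L) (hg : ∀ t, Complex.exp (L t) = g t) :
    logIncrement g = L 1 - L 0 := by
  obtain ⟨M, hM, hMg, h⟩ : ∃ M : ℝ → ℂ, Continuous M ∧ (∀ t, Complex.exp (M t) = g t) ∧
      M 1 - M 0 = logIncrement g := Classical.epsilon_spec
        (p := fun δ => ∃ L : ℝ → ℂ, Continuous L ∧ (∀ t, Complex.exp (L t) = g t) ∧ L 1 - L 0 = δ)
        ⟨_, L, hL, hg, rfl⟩
  rw [← h]
  exact sub_eq_sub_of_exp_eq hM hL (fun t => (hMg t).trans (hg t).symm) 1 0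

lemma exp_logIncrement {g : ℝ → ℂ} (hg : Continuous g) (h0 : ∀ t, g t ≠ 0) :
    Complex.exp (logIncrement g) = g 1 / g 0 := by
  obtain ⟨L, hL, hLg⟩ := exists_continuous_log hg h0
  rw [logIncrement_eq hL hLg, Complex.exp_sub, hLg, hLg]

lemma logIncrement_neg {g : ℝ → ℂ} (hg : Continuous g) (h0 : ∀ t, g t ≠ 0) :
    logIncrement (-g) = logIncrement g := by
  obtain ⟨L, hL, hLg⟩ := exists_continuous_log hg h0
  have hneg (t : ℝ) : Complex.exp (L t + Real.pi * Complex.I) = (-g) t := by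
    simp [Complex.exp_add, hLg]
  rw [logIncrement_eq hL hLg, logIncrement_eq (by fun_prop) hneg]
  ring

lemma logIncrement_boundary_square {g : ℝ × ℝ → ℂ} (hg : Continuous g) (h0 : ∀ x, g x ≠ 0) :
    logIncrement (fun s => g (s, 0)) + logIncrement (fun t => g (1, t)) =
      logIncrement (fun s => g (s, 1)) + logIncrement (fun t => g (0, t)) := by
  obtain ⟨L, hL, hLg⟩ := exists_continuous_log hg h0
  have hfst (t : ℝ) : logIncrement (fun s => g (s, t)) = L (1, t) - L (0, t) :=
    logIncrement_eq (L := fun s => L (s, t)) (by fun_prop) fun s => hLg (s, t)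
  have hsnd (s : ℝ) : logIncrement (fun t => g (s, t)) = L (s, 1) - L (s, 0) :=
    logIncrement_eq (L := fun t => L (s, t)) (by fun_prop) fun t => hLg (s, t)
  rw [hfst, hfst, hsnd, hsnd]
  ring

/-- The increment of a continuous logarithm of `γ - z` along the path `γ`; its imaginary part is
the angle swept by `γ` as seen from `z`. -/
noncomputable def logIncrementAlong {x y : ℂ} (γ : Path x y) (z : ℂ) : ℂ :=
  logIncrement fun t => γ.extend t - z

section Path

variable {x y x' y' z : ℂ} {γ : Path x y} {δ : Path x' y'}

lemma extend_sub_ne_zero (hz : z ∉ Set.range γ) (t : ℝ) : γ.extend t - z ≠ 0 := by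
  rw [← γ.extend_range] at hz
  exact sub_ne_zero.2 fun h => hz ⟨t, h⟩

lemma exp_logIncrementAlong (hz : z ∉ Set.range γ) :
    Complex.exp (logIncrementAlong γ z) = (y - z) / (x - z) := by
  rw [logIncrementAlong, exp_logIncrement (by fun_prop) (extend_sub_ne_zero hz), γ.extend_one,
    γ.extend_zero]

/-- The difference `γ s - δ t` does not vanish on the square, so its logarithm has no monodromy
around the boundary. -/
lemma logIncrementAlong_add_eq (h : Disjoint (Set.range γ) (Set.range δ)) :
    logIncrementAlong γ x' + logIncrementAlong δ y =
      logIncrementAlong γ y' + logIncrementAlong δ x := by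
  have hne (p : ℝ × ℝ) : γ.extend p.1 - δ.extend p.2 ≠ 0 := by
    rw [← γ.extend_range, ← δ.extend_range] at h
    exact sub_ne_zero.2 (h.ne_of_mem ⟨_, rfl⟩ ⟨_, rfl⟩)
  have hδ {w : ℂ} (hw : w ∈ Set.range γ) :
      logIncrement (fun t => w - δ.extend t) = logIncrementAlong δ w := by
    rw [logIncrementAlong, ← logIncrement_neg (by fun_prop)
      (extend_sub_ne_zero (Set.disjoint_left.1 h hw))]
    congr 1
    ext t
    simp
  have hsquare := logIncrement_boundary_square (by fun_prop) hne
  simp only [Path.extend_zero, Path.extend_one, hδ γ.source_mem_range,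
    hδ γ.target_mem_range] at hsquare
  exact hsquare

end Path

section CompleteBipartite

variable {a b : Fin 3 → ℂ} {γ : ∀ i j, Path (a i) (b j)}

lemma two_mul_sum_logIncrementAlong_sub
    (hγ : ∀ i k, i ≠ k → ∀ j l, j ≠ l → Disjoint (Set.range (γ i j)) (Set.range (γ k l)))
    {i k : Fin 3} (hik : i ≠ k) :
    2 * ∑ j, (logIncrementAlong (γ i j) (a k) - logIncrementAlong (γ k j) (a i)) =
      ∑ j, ∑ l with l ≠ j, logIncrementAlong (γ i j) (b l) -
        ∑ j, ∑ l with l ≠ j, logIncrementAlong (γ k j) (b l) := by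
  have e (j l) (hjl : j ≠ l := by decide) := logIncrementAlong_add_eq (hγ i k hik j l hjl)
  simp only [Finset.sum_sub_distrib, Fin.sum_univ_three, Fin.isValue, ne_eq,
    Finset.sum_filter, ite_not, ↓reduceIte, one_ne_zero, zero_add,
    Fin.reduceEq, zero_ne_one, add_zero]
  linear_combination e 0 1 + e 0 2 + e 1 0 + e 1 2 + e 2 0 + e 2 1

lemma exp_sum_logIncrementAlong_sub {x x' : ℂ} {α : ∀ j, Path x (b j)} {β : ∀ j, Path x' (b j)}
    (hα : ∀ j, x' ∉ Set.range (α j)) (hβ : ∀ j, x ∉ Set.range (β j)) :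
    Complex.exp (∑ j, (logIncrementAlong (α j) x' - logIncrementAlong (β j) x)) =
      -((∏ j, (b j - x')) / ∏ j, (b j - x)) := by
  have hne : x - x' ≠ 0 := sub_ne_zero.2 fun h => hα 0 (h ▸ (α 0).source_mem_range)
  have hfactor (j) : Complex.exp (logIncrementAlong (α j) x' - logIncrementAlong (β j) x) =
      -((b j - x') / (b j - x)) := by
    have hb : b j - x ≠ 0 := sub_ne_zero.2 fun h => hβ j (h ▸ (β j).target_mem_range)
    rw [Complex.exp_sub, exp_logIncrementAlong (hα j), exp_logIncrementAlong (hβ j),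
      ← neg_sub x x']
    field_simp
  simp only [Complex.exp_sum, hfactor, Finset.prod_neg, Finset.prod_div_distrib]
  norm_num

/-- By `two_mul_sum_logIncrementAlong_sub`, the sums over `j` for the three pairs `(0, 1)`,
`(1, 2)`, `(2, 0)` add up to zero, whereas by `exp_sum_logIncrementAlong_sub` the product of their
exponentials is `(-1) ^ 3`. -/
theorem not_pairwise_disjoint_completeBipartite (γ : ∀ i j, Path (a i) (b j)) :
    ¬∀ i k, i ≠ k → ∀ j l, j ≠ l → Disjoint (Set.range (γ i j)) (Set.range (γ k l)) := by
  intro hγ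
  have hmem {i k : Fin 3} (hik : i ≠ k) (j) : a k ∉ Set.range (γ i j) := by
    obtain ⟨l, hl⟩ := exists_ne j
    exact Set.disjoint_right.1 (hγ i k hik j l hl.symm) (γ k l).source_mem_range
  have hne (i) : ∏ j, (b j - a i) ≠ 0 := by
    obtain ⟨k, hk⟩ := exists_ne i
    exact Finset.prod_ne_zero_iff.2 fun j _ =>
      sub_ne_zero.2 fun h => hmem hk j (h ▸ (γ k j).target_mem_range)
  set U : Fin 3 → Fin 3 → ℂ := fun i k =>
    ∑ j, (logIncrementAlong (γ i j) (a k) - logIncrementAlong (γ k j) (a i))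
  have hexp {i k : Fin 3} (hik : i ≠ k) :
      Complex.exp (U i k) = -((∏ j, (b j - a k)) / ∏ j, (b j - a i)) :=
    exp_sum_logIncrementAlong_sub (hmem hik) (hmem hik.symm)
  have hsum : U 0 1 + U 1 2 + U 2 0 = 0 := by
    linear_combination (two_mul_sum_logIncrementAlong_sub hγ (i := 0) (k := 1) (by decide) +
      two_mul_sum_logIncrementAlong_sub hγ (i := 1) (k := 2) (by decide) +
      two_mul_sum_logIncrementAlong_sub hγ (i := 2) (k := 0) (by decide)) / 2
  have hprod : (-1 : ℂ) = 1 := by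
    calc (-1 : ℂ) = Complex.exp (U 0 1) * Complex.exp (U 1 2) * Complex.exp (U 2 0) := by
          rw [hexp (by decide), hexp (by decide), hexp (by decide)]
          field_simp [hne]
      _ = 1 := by rw [← Complex.exp_add, ← Complex.exp_add, hsum, Complex.exp_zero]
  norm_num at hprod

end CompleteBipartite

lemma exists_path_range_subset {X : Type*} [TopologicalSpace X] {x y : X} {f : ℝ → X}
    (hf : ContinuousOn f (Set.Icc 0 1)) (h : f 0 = x ∧ f 1 = y ∨ f 0 = y ∧ f 1 = x) :
    ∃ γ : Path x y, Set.range γ ⊆ f '' Set.Icc 0 1 := by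
  rcases h with ⟨h0, h1⟩ | ⟨h0, h1⟩
  · exact ⟨.ofLine hf h0 h1, Set.range_subset_iff.2 (Path.ofLine_mem hf h0 h1)⟩
  · refine ⟨(Path.ofLine hf h0 h1).symm, ?_⟩
    rw [Path.symm_range]
    exact Set.range_subset_iff.2 (Path.ofLine_mem hf h0 h1)

theorem completeBipartiteGraph_free_of_isPlanar {V : Type*} {G : SimpleGraph V}
    (hG : G.IsPlanar) : (completeBipartiteGraph (Fin 3) (Fin 3)).Free G := by
  rintro ⟨f⟩
  obtain ⟨pos, arc, -, hcont, -, hends, hvert, hcross⟩ := hG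
  let a (i : Fin 3) : V := f (.inl i)
  let b (j : Fin 3) : V := f (.inr j)
  have ha : a.Injective := f.injective.comp Sum.inl_injective
  have hb : b.Injective := f.injective.comp Sum.inr_injective
  have hab (i j) : G.Adj (a i) (b j) := f.toHom.map_adj (by simp)
  let e (i j : Fin 3) : G.edgeSet := ⟨s(a i, b j), hab i j⟩
  choose γ hγ using fun i j => exists_path_range_subset (hcont (e i j)) (hends (e i j) _ _ rfl)
  let φ := Complex.equivRealProdCLM.symm
  refine not_pairwise_disjoint_completeBipartite (fun i j => (γ i j).map φ.continuous)
    fun i k hik j l hjl => ?_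
  have hshare (v : V) (hv : v ∈ (e i j : Sym2 V)) (hv' : v ∈ (e k l : Sym2 V)) : False := by
    rcases Sym2.mem_iff.1 hv with rfl | rfl <;> rcases Sym2.mem_iff.1 hv' with h | h
    · exact hik (ha h)
    · exact (hab i l).ne h
    · exact (hab k j).ne h.symm
    · exact hjl (hb h)
  have harc : Disjoint (arc (e i j) '' Set.Icc 0 1) (arc (e k l) '' Set.Icc 0 1) := by
    rw [Set.disjoint_left]
    rintro _ ⟨s, hs, rfl⟩ ⟨t, ht, hst⟩
    have hne : e i j ≠ e k l := fun h =>
      hshare (a i) (Sym2.mem_mk_left _ _) (h ▸ Sym2.mem_mk_left _ _)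
    obtain ⟨v, hv⟩ := hcross _ _ hne s hs t ht hst.symm
    exact hshare v (hvert _ v s hs hv) (hvert _ v t ht (hst.trans hv))
  simp only [Path.map_coe, Set.range_comp]
  exact (Set.disjoint_image_iff φ.injective).2 (harc.mono (hγ i j) (hγ k l))

end Topology

/-! ### Regions reserved for new L-shapes -/

section Geometry

/-- `A` is an L-shape in the plane, of any position and positive size. -/
def IsLShape (A : Set (ℝ × ℝ)) : Prop :=
  ∃ x y w h, 0 < w ∧ 0 < h ∧ A = LShape x y w h

lemma mem_LShape {x y w h : ℝ} (hw : 0 ≤ w) (hh : 0 ≤ h) {q : ℝ × ℝ} :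
    q ∈ LShape x y w h ↔
      (q.1 = x ∧ y ≤ q.2 ∧ q.2 ≤ y + h) ∨ (q.2 = y ∧ x ≤ q.1 ∧ q.1 ≤ x + w) := by
  obtain ⟨u, v⟩ := q
  rw [LShape, ← Prod.image_mk_segment_right, ← Prod.image_mk_segment_left,
    segment_eq_Icc (by linarith), segment_eq_Icc (by linarith)]
  simp only [Set.mem_union, Set.mem_image, Set.mem_Icc, Prod.mk.injEq]
  grind

lemma exists_isLShape_mem_iff {x y X Y : ℝ} (hX : x < X) (hY : y < Y) :
    ∃ D, IsLShape D ∧ ∀ q : ℝ × ℝ, q ∈ D ↔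
      (q.1 = x ∧ y ≤ q.2 ∧ q.2 ≤ Y) ∨ (q.2 = y ∧ x ≤ q.1 ∧ q.1 ≤ X) := by
  refine ⟨LShape x y (X - x) (Y - y), ⟨_, _, _, _, sub_pos.2 hX, sub_pos.2 hY, rfl⟩, fun q => ?_⟩
  rw [mem_LShape (sub_pos.2 hX).le (sub_pos.2 hY).le, add_sub_cancel, add_sub_cancel]

lemma hasLRep_of_isLShape {V : Type*} {G : SimpleGraph V} {A : V → Set (ℝ × ℝ)}
    (hA : ∀ v, IsLShape (A v)) (hadj : ∀ u v, u ≠ v → (G.Adj u v ↔ (A u ∩ A v).Nonempty)) :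
    HasLRep G := by
  choose x y w h hw hh hxy using hA
  refine ⟨fun v => (x v, y v, w v, h v), fun v => ⟨hw v, hh v⟩, fun u v huv => ?_⟩
  rw [hadj u v huv, hxy u, hxy v]

/-- A half-open rectangle without its upper right corner beyond `(c, d)`. -/
def notchedRect (l b c d X Y : ℝ) : Set (ℝ × ℝ) :=
  {q | l < q.1 ∧ q.1 ≤ X ∧ b < q.2 ∧ q.2 ≤ Y ∧ ¬(c < q.1 ∧ d < q.2)}

/-- A half-open rectangle without its lower left corner up to `(c, d)`. -/
def conotchedRect (l b c d X Y : ℝ) : Set (ℝ × ℝ) :=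
  {q | l < q.1 ∧ q.1 ≤ X ∧ b < q.2 ∧ q.2 ≤ Y ∧ (c < q.1 ∨ d < q.2)}

/-- The traces of `A`, `B`, `C` on a notched rectangle are its top side, the vertical line at
abscissa `m`, and its right side. -/
structure IsVerticalTriple (A B C : Set (ℝ × ℝ)) (l b c d X Y m : ℝ) : Prop where
  left_lt : l < m
  lt_notch : m < c
  notch_le_right : c ≤ X
  bottom_lt_notch : b < d
  notch_le_top : d ≤ Y
  mem_fst_iff : ∀ q ∈ notchedRect l b c d X Y, q ∈ A ↔ q.2 = Y
  mem_snd_iff : ∀ q ∈ notchedRect l b c d X Y, q ∈ B ↔ q.1 = m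
  mem_trd_iff : ∀ q ∈ notchedRect l b c d X Y, q ∈ C ↔ q.1 = X

/-- The traces of `A`, `B`, `C` on a notched rectangle are its top side, the horizontal line at
ordinate `m`, and its right side. -/
structure IsHorizontalTriple (A B C : Set (ℝ × ℝ)) (l b c d X Y m : ℝ) : Prop where
  left_lt_notch : l < c
  notch_le_right : c ≤ X
  bottom_lt : b < m
  lt_notch : m < d
  notch_le_top : d ≤ Y
  mem_fst_iff : ∀ q ∈ notchedRect l b c d X Y, q ∈ A ↔ q.2 = Y
  mem_snd_iff : ∀ q ∈ notchedRect l b c d X Y, q ∈ B ↔ q.2 = m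
  mem_trd_iff : ∀ q ∈ notchedRect l b c d X Y, q ∈ C ↔ q.1 = X

/-- The traces of `A`, `B`, `C` on a rectangle without its lower left corner are the part in it of
an L-shape cornered at the missing point `(x₁, y₁)` and reaching up to ordinate `e`, the vertical
line at abscissa `x₂`, and the right side. -/
structure IsOuterTriple (A B C : Set (ℝ × ℝ)) (l b c d X Y x₁ y₁ e x₂ : ℝ) : Prop where
  left_lt : l < x₁
  lt_snd : x₁ < x₂
  snd_lt_notch : x₂ < c
  notch_lt_right : c < X
  bottom_lt : b < y₁
  lt_notch : y₁ < d
  notch_lt_end : d < e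
  end_lt_top : e < Y
  mem_fst_iff : ∀ q ∈ conotchedRect l b c d X Y, q ∈ A ↔ (q.1 = x₁ ∧ q.2 ≤ e) ∨ q.2 = y₁
  mem_snd_iff : ∀ q ∈ conotchedRect l b c d X Y, q ∈ B ↔ q.1 = x₂
  mem_trd_iff : ∀ q ∈ conotchedRect l b c d X Y, q ∈ C ↔ q.1 = X

/-- The three ways in which a triple of L-shapes may cross a region reserved for new L-shapes
meeting all three. -/
inductive IsStandardRegion (A B C : Set (ℝ × ℝ)) : Set (ℝ × ℝ) → Prop
  | vertical {l b c d X Y m : ℝ} (h : IsVerticalTriple A B C l b c d X Y m) :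
      IsStandardRegion A B C (notchedRect l b c d X Y)
  | horizontal {l b c d X Y m : ℝ} (h : IsHorizontalTriple A B C l b c d X Y m) :
      IsStandardRegion A B C (notchedRect l b c d X Y)
  | outer {l b c d X Y x₁ y₁ e x₂ : ℝ} (h : IsOuterTriple A B C l b c d X Y x₁ y₁ e x₂) :
      IsStandardRegion A B C (conotchedRect l b c d X Y)

/-- A region that is standard for the three sets `A i`, taken in some order. -/
def IsFreeRegion (A : Fin 3 → Set (ℝ × ℝ)) (R : Set (ℝ × ℝ)) : Prop :=
  ∃ σ : Equiv.Perm (Fin 3), IsStandardRegion (A (σ 0)) (A (σ 1)) (A (σ 2)) R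

lemma IsFreeRegion.of_comp {A : Fin 3 → Set (ℝ × ℝ)} {R : Set (ℝ × ℝ)} {σ : Equiv.Perm (Fin 3)}
    (h : IsFreeRegion (A ∘ σ) R) : IsFreeRegion A R := by
  obtain ⟨τ, hτ⟩ := h
  exact ⟨σ * τ, hτ⟩

/-- The L-shape `D` inside `R` meets the three sets `A i` and leaves three disjoint regions of `R`
free: `Q i` for `D` and the two sets other than `A i`. -/
structure IsSplitting (A : Fin 3 → Set (ℝ × ℝ)) (R D : Set (ℝ × ℝ)) (Q : Fin 3 → Set (ℝ × ℝ)) :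
    Prop where
  isLShape : IsLShape D
  subset : D ⊆ R
  meets : ∀ i, (D ∩ A i).Nonempty
  region_subset : ∀ i, Q i ⊆ R
  disjoint : Pairwise fun i j => Disjoint (Q i) (Q j)
  avoid : ∀ i, Disjoint (A i) (Q i)
  free : ∀ i, IsFreeRegion (Function.update A i D) (Q i)

lemma IsSplitting.of_comp {A Q : Fin 3 → Set (ℝ × ℝ)} {R D : Set (ℝ × ℝ)}
    {σ : Equiv.Perm (Fin 3)} (h : IsSplitting (A ∘ σ) R D Q) : IsSplitting A R D (Q ∘ σ.symm) where
  isLShape := h.isLShape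
  subset := h.subset
  meets i := by simpa using h.meets (σ.symm i)
  region_subset i := h.region_subset _
  disjoint := h.disjoint.comp_of_injective σ.symm.injective
  avoid i := by simpa using h.avoid (σ.symm i)
  free i := by
    have hfree := h.free (σ.symm i)
    rw [← Function.update_comp_equiv] at hfree
    exact hfree.of_comp

variable {A B C : Set (ℝ × ℝ)} {l b c d X Y : ℝ}

lemma IsSplitting.of_three {R D Q₀ Q₁ Q₂ : Set (ℝ × ℝ)} (hD : IsLShape D) (hDR : D ⊆ R)
    (hmeets : (D ∩ A).Nonempty ∧ (D ∩ B).Nonempty ∧ (D ∩ C).Nonempty)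
    (hQR : Q₀ ⊆ R ∧ Q₁ ⊆ R ∧ Q₂ ⊆ R)
    (hQ : Disjoint Q₀ Q₁ ∧ Disjoint Q₀ Q₂ ∧ Disjoint Q₁ Q₂)
    (havoid : Disjoint A Q₀ ∧ Disjoint B Q₁ ∧ Disjoint C Q₂)
    (hfree : IsFreeRegion (Function.update ![A, B, C] 0 D) Q₀ ∧
      IsFreeRegion (Function.update ![A, B, C] 1 D) Q₁ ∧
      IsFreeRegion (Function.update ![A, B, C] 2 D) Q₂) :
    IsSplitting ![A, B, C] R D ![Q₀, Q₁, Q₂] where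
  isLShape := hD
  subset := hDR
  meets := by simpa [Fin.forall_fin_succ] using hmeets
  region_subset := by simpa [Fin.forall_fin_succ] using hQR
  disjoint := by
    simp [Pairwise, Fin.forall_fin_succ, hQ, disjoint_comm (b := Q₀), disjoint_comm (b := Q₁)]
  avoid := by simpa [Fin.forall_fin_succ] using havoid
  free := by simpa [Fin.forall_fin_succ] using hfree

/-- The new L-shape is cornered close to the lower left corner of the region and ends on the top and
right sides, here and for a horizontal triple. -/
lemma IsVerticalTriple.exists_isSplitting {m : ℝ} (h : IsVerticalTriple A B C l b c d X Y m) :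
    ∃ D Q, IsSplitting ![A, B, C] (notchedRect l b c d X Y) D Q := by
  obtain ⟨hlm, hmc, hcX, hbd, hdY, hA, hB, hC⟩ := h
  obtain ⟨x, hlx, hxm⟩ := exists_between hlm
  obtain ⟨c', hmc', hcc'⟩ := exists_between hmc
  obtain ⟨y, hby, hyd⟩ := exists_between hbd
  obtain ⟨b', hbb', hby'⟩ := exists_between hby
  obtain ⟨D, hD, hmem⟩ := exists_isLShape_mem_iff (show x < X by linarith) (show y < Y by linarith)
  refine ⟨D, _, .of_three (Q₀ := notchedRect x b c' b' X y) (Q₁ := notchedRect c' b' c d X Y)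
    (Q₂ := notchedRect l y m Y m Y) hD ?subset ?meets ?region_subset ?disjoint ?avoid ?free⟩
  case meets =>
    have hDA : (x, Y) ∈ D ∩ A := by grind [notchedRect]
    have hDB : (m, y) ∈ D ∩ B := by grind [notchedRect]
    have hDC : (X, y) ∈ D ∩ C := by grind [notchedRect]
    exact ⟨⟨_, hDA⟩, ⟨_, hDB⟩, ⟨_, hDC⟩⟩
  case free =>
    have hDBC : IsVerticalTriple D B C x b c' b' X y m := by constructor <;> grind [notchedRect]
    have hADC : IsHorizontalTriple A D C c' b' c d X Y y := by constructor <;> grind [notchedRect]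
    have hADB : IsVerticalTriple A D B l y m Y m Y x := by constructor <;> grind [notchedRect]
    exact ⟨⟨1, .vertical hDBC⟩, ⟨1, .horizontal hADC⟩, ⟨Equiv.swap 1 2, .vertical hADB⟩⟩
  case subset | region_subset => grind [notchedRect]
  case disjoint | avoid =>
    simp only [Set.disjoint_left]
    grind [notchedRect]

lemma IsHorizontalTriple.exists_isSplitting {m : ℝ} (h : IsHorizontalTriple A B C l b c d X Y m) :
    ∃ D Q, IsSplitting ![A, B, C] (notchedRect l b c d X Y) D Q := by
  obtain ⟨hlc, hcX, hbm, hmd, hdY, hA, hB, hC⟩ := h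
  obtain ⟨x, hlx, hxc⟩ := exists_between hlc
  obtain ⟨l', hll', hlx'⟩ := exists_between hlx
  obtain ⟨y, hby, hym⟩ := exists_between hbm
  obtain ⟨d', hmd', hdd'⟩ := exists_between hmd
  obtain ⟨D, hD, hmem⟩ := exists_isLShape_mem_iff (show x < X by linarith) (show y < Y by linarith)
  refine ⟨D, _, .of_three (Q₀ := notchedRect x b X m X m) (Q₁ := notchedRect l' d' c d X Y)
    (Q₂ := notchedRect l y l' d' x Y) hD ?subset ?meets ?region_subset ?disjoint ?avoid ?free⟩
  case meets =>
    have hDA : (x, Y) ∈ D ∩ A := by grind [notchedRect]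
    have hDB : (x, m) ∈ D ∩ B := by grind [notchedRect]
    have hDC : (X, y) ∈ D ∩ C := by grind [notchedRect]
    exact ⟨⟨_, hDA⟩, ⟨_, hDB⟩, ⟨_, hDC⟩⟩
  case free =>
    have hBDC : IsHorizontalTriple B D C x b X m X m y := by constructor <;> grind [notchedRect]
    have hADC : IsVerticalTriple A D C l' d' c d X Y x := by constructor <;> grind [notchedRect]
    have hABD : IsHorizontalTriple A B D l y l' d' x Y m := by constructor <;> grind [notchedRect]
    exact ⟨⟨Equiv.swap 0 1, .horizontal hBDC⟩, ⟨1, .vertical hADC⟩, ⟨1, .horizontal hABD⟩⟩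
  case subset | region_subset => grind [notchedRect]
  case disjoint | avoid =>
    simp only [Set.disjoint_left]
    grind [notchedRect]

/-- The new L-shape is cornered at height `e`, left of `A`, so that its horizontal segment
passes through the upper end of `A`. -/
lemma IsOuterTriple.exists_isSplitting {x₁ y₁ e x₂ : ℝ}
    (h : IsOuterTriple A B C l b c d X Y x₁ y₁ e x₂) :
    ∃ D Q, IsSplitting ![A, B, C] (conotchedRect l b c d X Y) D Q := by
  obtain ⟨hlx, hxx, hxc, hcX, hby, hyd, hde, heY, hA, hB, hC⟩ := h
  obtain ⟨x, hlx', hxx₁⟩ := exists_between hlx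
  obtain ⟨e', hee', heY'⟩ := exists_between heY
  obtain ⟨b', heb', hbe'⟩ := exists_between hee'
  obtain ⟨c', hcc', hcX'⟩ := exists_between hcX
  obtain ⟨d', hyd', hde'⟩ := exists_between (hyd.trans hde)
  obtain ⟨D, hD, hmem⟩ := exists_isLShape_mem_iff (show x < X by linarith) hee'
  refine ⟨D, _, .of_three (Q₀ := conotchedRect l d' c' b' X Y) (Q₁ := notchedRect c b c' d' X e)
    (Q₂ := notchedRect x d x₂ e x₂ e) hD ?subset ?meets ?region_subset ?disjoint ?avoid ?free⟩
  case meets =>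
    have hDA : (x₁, e) ∈ D ∩ A := by grind [conotchedRect]
    have hDB : (x₂, e) ∈ D ∩ B := by grind [conotchedRect]
    have hDC : (X, e) ∈ D ∩ C := by grind [conotchedRect]
    exact ⟨⟨_, hDA⟩, ⟨_, hDB⟩, ⟨_, hDC⟩⟩
  case free =>
    have hDBC : IsOuterTriple D B C l d' c' b' X Y x e e' x₂ := by
      constructor <;> grind [conotchedRect]
    have hDAC : IsHorizontalTriple D A C c b c' d' X e y₁ := by
      constructor <;> grind [notchedRect, conotchedRect]
    have hDAB : IsVerticalTriple D A B x d x₂ e x₂ e x₁ := by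
      constructor <;> grind [notchedRect, conotchedRect]
    exact ⟨⟨1, .outer hDBC⟩, ⟨Equiv.swap 0 1, .horizontal hDAC⟩,
      ⟨(finRotate 3).symm, .vertical hDAB⟩⟩
  case subset | region_subset => grind [notchedRect, conotchedRect]
  case disjoint | avoid =>
    simp only [Set.disjoint_left]
    grind [notchedRect, conotchedRect]

lemma IsFreeRegion.exists_isSplitting {A : Fin 3 → Set (ℝ × ℝ)} {R : Set (ℝ × ℝ)}
    (h : IsFreeRegion A R) : ∃ D Q, IsSplitting A R D Q := by
  obtain ⟨σ, hσ⟩ := h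
  suffices ∃ D Q, IsSplitting (A ∘ σ) R D Q from
    let ⟨D, Q, hQ⟩ := this; ⟨D, Q ∘ σ.symm, hQ.of_comp⟩
  have heta : A ∘ σ = ![A (σ 0), A (σ 1), A (σ 2)] := by
    ext i : 1
    fin_cases i <;> rfl
  rw [heta]
  cases hσ with
  | vertical h => exact h.exists_isSplitting
  | horizontal h => exact h.exists_isSplitting
  | outer h => exact h.exists_isSplitting

lemma exists_isFreeRegion_disjoint :
    ∃ (A : Fin 3 → Set (ℝ × ℝ)) (R R' : Set (ℝ × ℝ)), (∀ i, IsLShape (A i)) ∧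
      (Pairwise fun i j => (A i ∩ A j).Nonempty) ∧
      IsFreeRegion A R ∧ IsFreeRegion A R' ∧ Disjoint R R' := by
  obtain ⟨A, hA, hmemA⟩ := exists_isLShape_mem_iff (x := 1) (X := 11) (y := 3) (Y := 5)
    (by norm_num) (by norm_num)
  obtain ⟨B, hB, hmemB⟩ := exists_isLShape_mem_iff (x := 2) (X := 4) (y := 2) (Y := 12)
    (by norm_num) (by norm_num)
  obtain ⟨C, hC, hmemC⟩ := exists_isLShape_mem_iff (x := 4) (X := 5) (y := 1) (Y := 11)
    (by norm_num) (by norm_num)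
  have houter : IsOuterTriple A B C 0 (11 / 4) 3 4 4 6 1 3 5 2 := by
    constructor <;> grind [conotchedRect]
  have hvertical : IsVerticalTriple A B C 1 2 3 (11 / 4) 4 3 2 := by
    constructor <;> grind [notchedRect]
  refine ⟨![A, B, C], conotchedRect 0 (11 / 4) 3 4 4 6, notchedRect 1 2 3 (11 / 4) 4 3, ?_, ?_,
    ⟨1, .outer houter⟩, ⟨1, .vertical hvertical⟩, ?_⟩
  · simp [Fin.forall_fin_succ, hA, hB, hC]
  · have hAB : (2, 3) ∈ A ∩ B := by grind
    have hAC : (4, 3) ∈ A ∩ C := by grind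
    have hBC : (4, 2) ∈ B ∩ C := by grind
    simpa [Pairwise, Fin.forall_fin_succ, Set.inter_comm] using
      ⟨⟨⟨_, hAB⟩, ⟨_, hAC⟩⟩, ⟨⟨_, hAB⟩, ⟨_, hBC⟩⟩, ⟨_, hAC⟩, ⟨_, hBC⟩⟩
  · rw [Set.disjoint_left]
    grind [notchedRect, conotchedRect]

end Geometry

/-! ### Insertion of the vertices -/

section ThreeTree

variable {V : Type*} {G : SimpleGraph V} {k : ℕ} {U S : Finset V} {v : V}

lemma card_filter_val_lt_of_equiv [Fintype V] {m : ℕ} (r : V ≃ Fin m) (hk : k ≤ m) :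
    Finset.card {v | (r v : ℕ) < k} = k := by
  rw [Finset.card_equiv r (t := {i : Fin m | (i : ℕ) < k}) (by simp), Fin.card_filter_val_lt,
    min_eq_right hk]

lemma IsKTreeBase.of_succ (h : IsKTreeBase k (k + 1) G) : IsKTreeBase k k G := by
  obtain ⟨hcard, r, hbase, hlater⟩ := h
  have := Fintype.ofEquiv _ r.symm
  refine ⟨by lia, r, fun u v huv hu hv => hbase u v huv (by lia) (by lia), fun v hv => ?_⟩
  rcases hv.eq_or_lt with hvk | hvk
  · refine ⟨({u | (r u : ℕ) < k} : Finset V), card_filter_val_lt_of_equiv r (by lia),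
      fun u hu => ?_, fun a ha c hc hac => ?_, fun u hu => ?_⟩ <;>
      simp only [Finset.mem_filter_univ] at *
    · lia
    · exact hbase a c hac (by lia) (by lia)
    · refine iff_of_true (hbase u v ?_ (by lia) (by lia)) (by lia)
      rintro rfl
      exact hu.false
  · exact hlater v hvk

lemma IsKTreeBase.induction_on [Fintype V] [DecidableEq V] (h : IsKTreeBase k k G)
    {P : Finset V → Prop} (base : ∀ U, G.IsNClique k U → P U)
    (step : ∀ U v S, v ∉ U → S ⊆ U → G.IsNClique k S → (∀ u ∈ U, (G.Adj u v ↔ u ∈ S)) →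
      P U → P (insert v U)) : P Finset.univ := by
  obtain ⟨hcard, r, hbase, hlater⟩ := h
  suffices ∀ n, k ≤ n → n ≤ Nat.card V → P {v | (r v : ℕ) < n} by
    simpa [← Nat.card_eq_fintype_card] using this _ hcard le_rfl
  refine Nat.le_induction (fun _ => base _ ⟨?_, ?_⟩) fun n hkn ih hn => ?_
  · intro u hu v hv huv
    exact hbase u v huv (by simpa using hu) (by simpa using hv)
  · exact card_filter_val_lt_of_equiv r hcard
  · set v := r.symm ⟨n, hn⟩ with hv
    have hrv : (r v : ℕ) = n := by simp [hv]
    obtain ⟨S, hScard, hSlt, hSadj, hS⟩ := hlater v (by lia)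
    have hinsert : ({u | (r u : ℕ) < n + 1} : Finset V) =
        insert v ({u | (r u : ℕ) < n} : Finset V) := by
      ext u
      rw [Finset.mem_filter_univ, Finset.mem_insert, Finset.mem_filter_univ,
        ← r.apply_eq_iff_eq, Fin.ext_iff]
      lia
    rw [hinsert]
    refine step _ v S (by simp [hrv]) (fun u hu => by simpa [hrv] using hSlt u hu)
      ⟨fun a ha c hc => hSadj a ha c hc, hScard⟩ (fun u hu => hS u ?_) (ih (by lia))
    simpa [hrv] using hu

section HasTwoSides

variable [DecidableEq V] [DecidableRel G.Adj] {F F' : List (Finset V)}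

/-- Every `k`-clique inside `U` has two sides, each of them either listed in `F`, as still empty,
or taken by a common neighbour in `U` of the clique. -/
def HasTwoSides (G : SimpleGraph V) [DecidableRel G.Adj] (k : ℕ) (U : Finset V)
    (F : List (Finset V)) : Prop :=
  ∀ T ⊆ U, G.IsNClique k T → 2 ≤ F.count T + Finset.card {w ∈ U | ∀ u ∈ T, G.Adj u w}

lemma hasTwoSides_of_isNClique (hU : G.IsNClique k U) : HasTwoSides G k U [U, U] := by
  intro T hTU hT
  obtain rfl : T = U := Finset.eq_of_subset_of_card_le hTU (hU.card_eq.trans hT.card_eq.symm).le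
  simp

lemma HasTwoSides.perm (h : HasTwoSides G k U F) (hF : F.Perm F') : HasTwoSides G k U F' :=
  fun T hTU hT => hF.count_eq T ▸ h T hTU hT

lemma HasTwoSides.mem_of_completeBipartiteGraph_free (h : HasTwoSides G k U F)
    (hfree : (completeBipartiteGraph (Fin k) (Fin 3)).Free G) (hSU : S ⊆ U)
    (hS : G.IsNClique k S) (hv : v ∉ U) (hadj : ∀ u ∈ S, G.Adj u v) : S ∈ F := by
  by_contra hSF
  set W : Finset V := {w ∈ U | ∀ u ∈ S, G.Adj u w}
  have hWcard : 2 ≤ W.card := by simpa [List.count_eq_zero.2 hSF] using h S hSU hS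
  have hvW : v ∉ W := fun h => hv (Finset.mem_filter.1 h).1
  obtain ⟨X, hXW, hX⟩ : ∃ X ⊆ insert v W, X.card = 3 := by
    apply Finset.exists_subset_card_eq
    rw [Finset.card_insert_of_notMem hvW]
    lia
  refine hfree (SimpleGraph.completeBipartiteGraph_isContained_iff.2
    ⟨S, X, by simpa using hS.card_eq, by simpa using hX, fun u hu w hw => ?_⟩)
  rcases Finset.mem_insert.1 (hXW hw) with rfl | hw
  · exact hadj u hu
  · exact (Finset.mem_filter.1 hw).2 u hu

lemma HasTwoSides.insert_vertex (h : HasTwoSides G k U (S :: F)) (hSU : S ⊆ U)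
    (hS : G.IsNClique k S) (hv : v ∉ U) (hadj : ∀ u ∈ U, (G.Adj u v ↔ u ∈ S))
    (hF' : ∀ a ∈ S, insert v (S.erase a) ∈ F') : HasTwoSides G k (insert v U) (F' ++ F) := by
  intro T hTU hT
  rw [List.count_append]
  by_cases hvT : v ∈ T
  · obtain ⟨a, ha, rfl⟩ : ∃ a ∉ T.erase v, insert a (T.erase v) = S := by
      rw [Finset.exists_eq_insert_iff, Finset.card_erase_add_one hvT, hT.card_eq, hS.card_eq]
      refine ⟨fun u hu => ?_, rfl⟩
      obtain ⟨huv, huT⟩ := Finset.mem_erase.1 hu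
      have huU := Finset.mem_of_mem_insert_of_ne (hTU huT) huv
      exact (hadj u huU).1 (hT.isClique huT hvT huv)
    have hTF' : T ∈ F' := by
      simpa [Finset.erase_insert ha, Finset.insert_erase hvT] using
        hF' a (Finset.mem_insert_self _ _)
    have haU : a ∈ U := hSU (Finset.mem_insert_self _ _)
    have hcommon : a ∈ ({w ∈ insert v U | ∀ u ∈ T, G.Adj u w} : Finset V) := by
      refine Finset.mem_filter.2 ⟨Finset.mem_insert_of_mem haU, fun u hu => ?_⟩
      by_cases huv : u = v
      · exact huv ▸ ((hadj a haU).2 (Finset.mem_insert_self _ _)).symm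
      · have huT := Finset.mem_erase.2 ⟨huv, hu⟩
        exact hS.isClique (Finset.mem_insert_of_mem huT) (Finset.mem_insert_self _ _)
          (ne_of_mem_of_not_mem huT ha)
    have := List.count_pos_iff.2 hTF'
    have := Finset.card_pos.2 ⟨a, hcommon⟩
    lia
  · have hTU : T ⊆ U := (Finset.subset_insert_iff_of_notMem hvT).1 hTU
    have hcount := h T hTU hT
    simp only [List.count_cons, beq_iff_eq] at hcount
    rw [Finset.filter_insert]
    by_cases hST : S = T
    · rw [if_pos fun u hu => (hadj u (hTU hu)).2 (hST ▸ hu),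
        Finset.card_insert_of_notMem (by simp [hv])]
      rw [if_pos hST] at hcount
      lia
    · rw [if_neg hST] at hcount
      split_ifs
      · rw [Finset.card_insert_of_notMem (by simp [hv])]
        lia
      · lia

end HasTwoSides

lemma injective_update {ι : Type*} [DecidableEq ι] {e : ι → V} (he : Function.Injective e)
    {i : ι} {v : V} (hv : ∀ j, e j ≠ v) : Function.Injective (Function.update e i v) := by
  intro j j' h
  simp only [Function.update_apply] at h
  split_ifs at h with hj hj' hj'
  · rw [hj, hj']
  · exact absurd h.symm (hv j')
  · exact absurd h (hv j)
  · exact he h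

lemma image_univ_update_of_injective {ι : Type*} [Fintype ι] [DecidableEq ι] [DecidableEq V]
    {e : ι → V} (he : Function.Injective e) (i : ι) (v : V) :
    Finset.univ.image (Function.update e i v) = insert v ((Finset.univ.image e).erase (e i)) := by
  rw [← Finset.image_erase he, ← Finset.insert_erase (Finset.mem_univ i), Finset.image_insert,
    Function.update_self, Finset.erase_insert_eq_erase, Finset.erase_idem]
  congr 1
  exact Finset.image_congr fun j hj => Function.update_of_ne (Finset.ne_of_mem_erase hj) _ _

/-- The sets `A u`, for `u ∈ U`, are L-shapes representing the subgraph induced on `U`, and every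
pair in `E` consists of a triangle, given by an enumeration of its vertices, and of a free region
for it; the L-shapes of the other vertices avoid that region, and the regions are disjoint. -/
structure IsPartialLRep (G : SimpleGraph V) (U : Finset V) (A : V → Set (ℝ × ℝ))
    (E : List ((Fin 3 → V) × Set (ℝ × ℝ))) : Prop where
  isLShape : ∀ u ∈ U, IsLShape (A u)
  adj_iff : ∀ u ∈ U, ∀ v ∈ U, u ≠ v → (G.Adj u v ↔ (A u ∩ A v).Nonempty)
  face_injective : ∀ f ∈ E, Function.Injective f.1
  face_mem : ∀ f ∈ E, ∀ i, f.1 i ∈ U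
  free : ∀ f ∈ E, IsFreeRegion (A ∘ f.1) f.2
  avoid : ∀ f ∈ E, ∀ u ∈ U, u ∉ Set.range f.1 → Disjoint (A u) f.2
  disjoint : E.Pairwise fun f g => Disjoint f.2 g.2

variable {A : V → Set (ℝ × ℝ)} {E E' : List ((Fin 3 → V) × Set (ℝ × ℝ))}

lemma IsPartialLRep.perm (h : IsPartialLRep G U A E) (hE : E.Perm E') :
    IsPartialLRep G U A E' where
  isLShape := h.isLShape
  adj_iff := h.adj_iff
  face_injective f hf := h.face_injective f (hE.mem_iff.2 hf)
  face_mem f hf := h.face_mem f (hE.mem_iff.2 hf)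
  free f hf := h.free f (hE.mem_iff.2 hf)
  avoid f hf := h.avoid f (hE.mem_iff.2 hf)
  disjoint := hE.pairwise h.disjoint fun h => h.symm

variable {e : Fin 3 → V} {R D : Set (ℝ × ℝ)} {Q : Fin 3 → Set (ℝ × ℝ)}

lemma IsPartialLRep.inter_nonempty_iff (h : IsPartialLRep G U A ((e, R) :: E))
    (hs : IsSplitting (A ∘ e) R D Q) {u : V} (hu : u ∈ U) :
    (A u ∩ D).Nonempty ↔ u ∈ Set.range e := by
  constructor
  · contrapose!
    exact fun hue =>
      ((h.avoid _ List.mem_cons_self u hu hue).mono_right hs.subset).inter_eq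
  · rintro ⟨i, rfl⟩
    exact Set.inter_comm D _ ▸ hs.meets i

lemma IsPartialLRep.disjoint_of_notMem_range_update (h : IsPartialLRep G U A ((e, R) :: E))
    (hs : IsSplitting (A ∘ e) R D Q) {u : V} (hu : u ∈ U) {i : Fin 3}
    (hue : u ∉ Set.range (Function.update e i v)) : Disjoint (A u) (Q i) := by
  by_cases hu' : u ∈ Set.range e
  · obtain ⟨j, rfl⟩ := hu'
    obtain rfl : j = i := by
      by_contra hji
      exact hue ⟨j, Function.update_of_ne hji _ _⟩
    exact hs.avoid j
  · exact (h.avoid _ List.mem_cons_self u hu hu').mono_right (hs.region_subset i)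

variable [DecidableEq V]

lemma IsPartialLRep.adj_iff_update (h : IsPartialLRep G U A ((e, R) :: E)) (hv : v ∉ U)
    (hadj : ∀ u ∈ U, (G.Adj u v ↔ u ∈ Set.range e)) (hs : IsSplitting (A ∘ e) R D Q) :
    ∀ u ∈ insert v U, ∀ w ∈ insert v U, u ≠ w →
      (G.Adj u w ↔ (Function.update A v D u ∩ Function.update A v D w).Nonempty) := by
  have hupd : ∀ u ∈ U, Function.update A v D u = A u := fun u hu =>
    Function.update_of_ne (ne_of_mem_of_not_mem hu hv) _ _
  have hadj' : ∀ u ∈ U, (G.Adj u v ↔ (A u ∩ D).Nonempty) := fun u hu =>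
    (hadj u hu).trans (h.inter_nonempty_iff hs hu).symm
  intro u hu w hw huw
  rcases Finset.mem_insert.1 hu with rfl | huU <;> rcases Finset.mem_insert.1 hw with rfl | hwU
  · exact absurd rfl huw
  · rw [Function.update_self, hupd w hwU, Set.inter_comm, G.adj_comm, hadj' w hwU]
  · rw [Function.update_self, hupd u huU, hadj' u huU]
  · rw [hupd u huU, hupd w hwU, h.adj_iff u huU w hwU huw]

lemma IsPartialLRep.insert_vertex (h : IsPartialLRep G U A ((e, R) :: E)) (hv : v ∉ U)
    (hadj : ∀ u ∈ U, (G.Adj u v ↔ u ∈ Set.range e)) (hs : IsSplitting (A ∘ e) R D Q) :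
    IsPartialLRep G (insert v U) (Function.update A v D)
      (List.ofFn (fun i => (Function.update e i v, Q i)) ++ E) := by
  obtain ⟨hRE, hEE⟩ := List.pairwise_cons.1 h.disjoint
  have heU : ∀ i, e i ∈ U := h.face_mem _ List.mem_cons_self
  have he : Function.Injective e := h.face_injective _ List.mem_cons_self
  have hne : ∀ u ∈ U, u ≠ v := fun u hu => ne_of_mem_of_not_mem hu hv
  have hupd : ∀ u ∈ U, Function.update A v D u = A u := fun u hu =>
    Function.update_of_ne (hne u hu) _ _
  constructor
  · refine Finset.forall_mem_insert _ _ _ |>.2 ⟨?_, fun u hu => ?_⟩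
    · simpa using hs.isLShape
    · exact hupd u hu ▸ h.isLShape u hu
  · exact h.adj_iff_update hv hadj hs
  · simp only [List.forall_mem_append, List.forall_mem_ofFn_iff]
    refine ⟨fun i => ?_, fun f hf => h.face_injective f (List.mem_cons_of_mem _ hf)⟩
    exact injective_update he fun j => hne _ (heU j)
  · simp only [List.forall_mem_append, List.forall_mem_ofFn_iff]
    refine ⟨fun i j => ?_, fun f hf i =>
      Finset.mem_insert_of_mem (h.face_mem f (List.mem_cons_of_mem _ hf) i)⟩
    rcases eq_or_ne j i with rfl | hji
    · simp
    · simp [hji, heU]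
  · simp only [List.forall_mem_append, List.forall_mem_ofFn_iff]
    refine ⟨fun i => ?_, fun f hf => ?_⟩
    · convert hs.free i using 1
      ext1 j
      rcases eq_or_ne j i with rfl | hji
      · simp
      · simp [hji, hupd _ (heU j)]
    · convert h.free f (List.mem_cons_of_mem _ hf) using 1
      exact funext fun i => hupd _ (h.face_mem f (List.mem_cons_of_mem _ hf) i)
  · simp only [List.forall_mem_append, List.forall_mem_ofFn_iff, Finset.forall_mem_insert]
    refine ⟨fun i => ⟨fun hvi => absurd ⟨i, Function.update_self _ _ _⟩ hvi, fun u hu hue => ?_⟩,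
      fun f hf => ⟨fun _ => ?_, fun u hu hue => ?_⟩⟩
    · exact hupd u hu ▸ h.disjoint_of_notMem_range_update hs hu hue
    · exact (Function.update_self v D A).symm ▸ (hRE f hf).mono_left hs.subset
    · exact hupd u hu ▸ h.avoid f (List.mem_cons_of_mem _ hf) u hu hue
  · refine List.pairwise_append.2 ⟨?_, hEE, ?_⟩
    · exact List.pairwise_ofFn.2 fun i j hij => hs.disjoint hij.ne
    · simp only [List.forall_mem_ofFn_iff]
      exact fun i f hf => (hRE f hf).mono_left (hs.region_subset i)

/-- The invariant of the construction: the subgraph induced on `U` has a representation by L-shapes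
with enough free regions for every triangle in `U` to keep two sides. -/
def IsExtendable (G : SimpleGraph V) [DecidableRel G.Adj] (U : Finset V) : Prop :=
  ∃ A E, IsPartialLRep G U A E ∧ HasTwoSides G 3 U (E.map fun f => Finset.univ.image f.1)

variable [DecidableRel G.Adj]

lemma isExtendable_of_isNClique (hU : G.IsNClique 3 U) : IsExtendable G U := by
  obtain ⟨A₀, R, R', hA₀, hmeet, hR, hR', hRR'⟩ := exists_isFreeRegion_disjoint
  let e : Fin 3 → V := Subtype.val ∘ (U.equivFinOfCardEq hU.card_eq).symm
  have he : Function.Injective e := Subtype.val_injective.comp (Equiv.injective _)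
  have heU : Finset.univ.image e = U := by
    apply Finset.coe_injective
    rw [Finset.coe_image, Finset.coe_univ, Set.image_univ]
    exact (EquivLike.range_comp _ _).trans Subtype.range_coe
  have hUe : ∀ u ∈ U, ∃ i, e i = u := by simp [← heU]
  let A : V → Set (ℝ × ℝ) := Function.extend e A₀ fun _ => ∅
  have hAe : A ∘ e = A₀ := Function.extend_comp he _ _
  have hAe' : ∀ i, A (e i) = A₀ i := congrFun hAe
  refine ⟨A, [(e, R), (e, R')], ?_, by simpa [heU] using hasTwoSides_of_isNClique hU⟩
  constructor
  · intro u hu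
    obtain ⟨i, rfl⟩ := hUe u hu
    exact hAe' i ▸ hA₀ i
  · intro u hu v hv huv
    obtain ⟨i, rfl⟩ := hUe u hu
    obtain ⟨j, rfl⟩ := hUe v hv
    rw [hAe', hAe']
    exact iff_of_true (hU.isClique hu hv huv) (hmeet (ne_of_apply_ne e huv))
  · simp [he]
  · simp [← heU]
  · simp [hAe, hR, hR']
  · simp only [List.forall_mem_cons, List.not_mem_nil, false_imp_iff, implies_true, and_true]
    exact ⟨fun u hu hue => absurd (hUe u hu) hue, fun u hu hue => absurd (hUe u hu) hue⟩
  · simpa using hRR'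

lemma IsExtendable.insert_vertex (h : IsExtendable G U)
    (hfree : (completeBipartiteGraph (Fin 3) (Fin 3)).Free G) (hv : v ∉ U) (hSU : S ⊆ U)
    (hS : G.IsNClique 3 S) (hadj : ∀ u ∈ U, (G.Adj u v ↔ u ∈ S)) :
    IsExtendable G (insert v U) := by
  obtain ⟨A, E, hA, hE⟩ := h
  obtain ⟨⟨e, R⟩, hmem, rfl⟩ := List.mem_map.1 <|
    hE.mem_of_completeBipartiteGraph_free hfree hSU hS hv fun u hu => (hadj u (hSU hu)).2 hu
  obtain ⟨E', hperm⟩ : ∃ E', E.Perm ((e, R) :: E') := by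
    obtain ⟨E₁, E₂, rfl⟩ := List.append_of_mem hmem
    exact ⟨_, List.perm_middle⟩
  replace hA := hA.perm hperm
  replace hE := hE.perm (hperm.map _)
  obtain ⟨D, Q, hs⟩ := (hA.free _ List.mem_cons_self).exists_isSplitting
  refine ⟨_, _, hA.insert_vertex hv (by simpa using hadj) hs, ?_⟩
  rw [List.map_append]
  refine hE.insert_vertex hSU hS hv hadj fun a ha => ?_
  obtain ⟨i, -, rfl⟩ := Finset.mem_image.1 ha
  have he : Function.Injective e := hA.face_injective _ List.mem_cons_self
  rw [← image_univ_update_of_injective he]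
  exact List.mem_map_of_mem (List.mem_ofFn.2 ⟨i, rfl⟩)

end ThreeTree

theorem planar_three_tree_hasLRep_general {V : Type*} (G : SimpleGraph V) (h : IsKTreeBase 3 3 G)
    (hfree : (completeBipartiteGraph (Fin 3) (Fin 3)).Free G) : HasLRep G := by
  classical
  obtain ⟨-, r, -⟩ := id h
  have := Fintype.ofEquiv _ r.symm
  obtain ⟨A, E, hA, -⟩ : IsExtendable G Finset.univ :=
    h.induction_on (fun _ => isExtendable_of_isNClique) fun _ _ _ hv hSU hS hadj hU =>
      hU.insert_vertex hfree hv hSU hS hadj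
  exact hasLRep_of_isLShape (fun v => hA.isLShape v (Finset.mem_univ v))
    fun u v => hA.adj_iff u (Finset.mem_univ u) v (Finset.mem_univ v)

/-- Every planar 3-tree admits an `{L}`-representation: an
intersection representation where every vertex is an axis-aligned L-shape of a single
rotation, adjacency being intersection of the shapes. -/
theorem planar_three_tree_hasLRep {V : Type*} (G : SimpleGraph V)
    (h3 : IsThreeTree G) (hpl : G.IsPlanar) : HasLRep G :=
  planar_three_tree_hasLRep_general G (IsKTreeBase.of_succ h3)
    (completeBipartiteGraph_free_of_isPlanar hpl)
end

section
/- For every fixed t ≥ 2, the number of cocomparability graphs on n labeled vertices arising from posets of dimension at most t is at least n^{(t−1−o(1))n}; that is, log of this number is at least n(t−1−o(1))·log n. -/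
/-- The cocomparability graph of a partial order: two distinct elements are adjacent
iff they are incomparable. -/
def cocompGraph {α : Type*} (P : PartialOrder α) : SimpleGraph α :=
  SimpleGraph.fromRel (fun a b => ¬ P.le a b ∧ ¬ P.le b a)

/-- The partial order `P` has dimension at most `t`: its order relation is the
intersection of `t` linear orders on the ground set. -/
def HasDimAtMost {α : Type*} (P : PartialOrder α) (t : ℕ) : Prop :=
  ∃ r : Fin t → α → α → Prop, (∀ i, IsLinearOrder α (r i)) ∧
    ∀ a b : α, P.le a b ↔ ∀ i, r i a b

/-!
Fix `m` and choose `t * m` reference points, one for each direction `i` and level `j < m`: it has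
coordinate `j` in direction `i` and coordinate `0` in all other directions. Every other point `x` is
placed freely in `{0, …, m - 1} ^ t`. Breaking ties in favour of the reference points, `x` never
lies below the reference point `(i, j)` (here `t ≥ 2` enters), and it lies above it iff its `i`-th
coordinate is at least `j`. Hence the cocomparability graph of the dominance order determines all
coordinates of the `k = n - t * m` free points, which gives `m ^ (t * k)` graphs. With `m = ⌈n ^ a⌉`
and `a < 1` close to `1`, almost all points are free and the exponent of `n` is close to `t * n`.
-/

open Filter Asymptotics

theorem cocompGraph_adj {α : Type*} (P : PartialOrder α) (a b : α) :
    (cocompGraph P).Adj a b ↔ ¬ P.le a b ∧ ¬ P.le b a := by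
  have ne_of_not_le (h : ¬ P.le a b) : a ≠ b := fun hab => h (hab ▸ P.le_refl a)
  rw [cocompGraph, SimpleGraph.fromRel_adj]
  tauto

/-- The graphs on the vertex set `α` counted by the main theorem: the cocomparability graphs of
posets of dimension at most `t`. -/
def cocompGraphsOfDimAtMost (α : Type*) (t : ℕ) : Set (SimpleGraph α) :=
  {G | ∃ P : PartialOrder α, HasDimAtMost P t ∧ G = cocompGraph P}

theorem toLex_prodMk_injective {α β : Type*} (f : α → β) :
    Function.Injective fun a => toLex (f a, a) :=
  fun _ _ h => congrArg (fun p : β ×ₗ α => (ofLex p).2) h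

section DominanceOrder

variable {α ι β : Type*} [LinearOrder α] [LinearOrder β]

/-- The coordinatewise order of a family of points with coordinates `c a i`, where ties in each
coordinate are broken by the linear order of the index type `α`, so that points with equal
coordinates are still distinguished and each coordinate orders `α` linearly. -/
abbrev dominanceOrder [Nonempty ι] (c : α → ι → β) : PartialOrder α :=
  PartialOrder.lift (fun a i => toLex (c a i, a)) fun _ _ h =>
    toLex_prodMk_injective (c · (Classical.arbitrary ι)) (congrFun h _)

theorem hasDimAtMost_dominanceOrder {t : ℕ} [NeZero t] (c : α → Fin t → β) :
    HasDimAtMost (dominanceOrder c) t :=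
  ⟨fun i a b => toLex (c a i, a) ≤ toLex (c b i, b),
    fun i => (RelEmbedding.preimage ⟨_, toLex_prodMk_injective (c · i)⟩ (· ≤ ·)).isLinearOrder,
    fun _ _ => Iff.rfl⟩

theorem dominanceOrder_le_iff_of_lt [Nonempty ι] (c : α → ι → β) {a b : α} (hab : a < b) :
    (dominanceOrder c).le a b ↔ c a ≤ c b := by
  change (∀ i, toLex (c a i, a) ≤ toLex (c b i, b)) ↔ _
  simp only [Prod.Lex.toLex_le_toLex, hab.le, and_true, ← le_iff_lt_or_eq, Pi.le_def]

theorem dominanceOrder_ge_iff_of_lt [Nonempty ι] (c : α → ι → β) {a b : α} (hab : a < b) :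
    (dominanceOrder c).le b a ↔ ∀ i, c b i < c a i := by
  change (∀ i, toLex (c b i, b) ≤ toLex (c a i, a)) ↔ _
  simp only [Prod.Lex.toLex_le_toLex, hab.not_ge, and_false, or_false]

variable [OrderBot β] [Nontrivial ι] [DecidableEq ι]

theorem cocompGraph_dominanceOrder_adj_iff {c : α → ι → β} {r x : α} (hrx : r < x) {i : ι} {j : β}
    (hr : c r = Function.update ⊥ i j) :
    (cocompGraph (dominanceOrder c)).Adj r x ↔ c x i < j := by
  have not_ge : ¬ (dominanceOrder c).le x r := by
    rw [dominanceOrder_ge_iff_of_lt c hrx]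
    obtain ⟨i', hi'⟩ := exists_ne i
    intro h
    simpa [hr, hi'] using h i'
  have le_iff : (dominanceOrder c).le r x ↔ j ≤ c x i := by
    simp [dominanceOrder_le_iff_of_lt c hrx, hr, update_le_iff]
  rw [cocompGraph_adj, le_iff, not_le, and_iff_left not_ge]

theorem eq_of_cocompGraph_dominanceOrder_eq {c c' : α → ι → β} {ref : ι × β → α} {x : α}
    (ref_lt : ∀ p, ref p < x)
    (hc : ∀ p, c (ref p) = Function.update ⊥ p.1 p.2)
    (hc' : ∀ p, c' (ref p) = Function.update ⊥ p.1 p.2)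
    (h : cocompGraph (dominanceOrder c) = cocompGraph (dominanceOrder c')) : c x = c' x := by
  funext i
  refine eq_of_forall_gt_iff fun j => ?_
  rw [← cocompGraph_dominanceOrder_adj_iff (ref_lt (i, j)) (hc (i, j)), h,
    cocompGraph_dominanceOrder_adj_iff (ref_lt (i, j)) (hc' (i, j))]

end DominanceOrder

section Counting

theorem castAdd_lt_natAdd {m n : ℕ} (i : Fin m) (j : Fin n) : Fin.castAdd n i < Fin.natAdd m j :=
  i.isLt.trans_le (Nat.le_add_right m j)

variable {t m k : ℕ} [NeZero m]

/-- The coordinates of the `t * m` reference points, indexed by direction and level, followed by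
those of the `k` free points. The reference points come first so that they win ties in
`dominanceOrder`. -/
noncomputable def withReferencePoints (y : Fin k → Fin t → Fin m) :
    Fin (t * m + k) → Fin t → Fin m :=
  Fin.append
    (fun p => Function.update ⊥ (finProdFinEquiv.symm p).1 (finProdFinEquiv.symm p).2) y

theorem withReferencePoints_castAdd (y : Fin k → Fin t → Fin m) (p : Fin t × Fin m) :
    withReferencePoints y (Fin.castAdd k (finProdFinEquiv p)) = Function.update ⊥ p.1 p.2 := by
  rw [withReferencePoints, Fin.append_left, Equiv.symm_apply_apply]

theorem withReferencePoints_natAdd (y : Fin k → Fin t → Fin m) (x : Fin k) :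
    withReferencePoints y (Fin.natAdd (t * m) x) = y x :=
  Fin.append_right _ _ x

theorem cocompGraph_withReferencePoints_injective [Nontrivial (Fin t)] :
    Function.Injective fun y : Fin k → Fin t → Fin m =>
      cocompGraph (dominanceOrder (withReferencePoints y)) := by
  intro y z h
  funext x
  rw [← withReferencePoints_natAdd y x, ← withReferencePoints_natAdd z x]
  exact eq_of_cocompGraph_dominanceOrder_eq (fun p => castAdd_lt_natAdd (finProdFinEquiv p) x)
    (withReferencePoints_castAdd y) (withReferencePoints_castAdd z) h

theorem pow_le_ncard_cocompGraphsOfDimAtMost (ht : 2 ≤ t) :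
    m ^ (t * k) ≤ (cocompGraphsOfDimAtMost (Fin (t * m + k)) t).ncard := by
  have : Nontrivial (Fin t) := Fin.nontrivial_iff_two_le.mpr ht
  have : NeZero t := ⟨by lia⟩
  calc m ^ (t * k) = Nat.card (Fin k → Fin t → Fin m) := by simp [pow_mul]
    _ = (Set.range fun y : Fin k → Fin t → Fin m =>
          cocompGraph (dominanceOrder (withReferencePoints y))).ncard :=
        (Set.ncard_range_of_injective cocompGraph_withReferencePoints_injective).symm
    _ ≤ (cocompGraphsOfDimAtMost (Fin (t * m + k)) t).ncard := by
        refine Set.ncard_le_ncard ?_ (Set.toFinite _)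
        rintro _ ⟨y, rfl⟩
        exact ⟨_, hasDimAtMost_dominanceOrder _, rfl⟩

end Counting

theorem isLittleO_rpow_rpow_atTop {a b : ℝ} (hab : a < b) :
    (fun x : ℝ => x ^ a) =o[atTop] fun x : ℝ => x ^ b := by
  refine isLittleO_of_tendsto' ?_ ((tendsto_rpow_neg_atTop (sub_pos.mpr hab)).congr' ?_)
  · filter_upwards [eventually_gt_atTop 0] with x hx h
    exact absurd h (Real.rpow_pos_of_pos hx b).ne'
  · filter_upwards [eventually_gt_atTop 0] with x hx
    rw [neg_sub, Real.rpow_sub hx]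

theorem isLittleO_natCeil_rpow_id_atTop {a : ℝ} (ha0 : 0 < a) (ha1 : a < 1) :
    (fun x : ℝ => (⌈x ^ a⌉₊ : ℝ)) =o[atTop] fun x : ℝ => x := by
  have rpow_isLittleO : (fun x : ℝ => x ^ a) =o[atTop] fun x : ℝ => x := by
    simpa only [Real.rpow_one] using isLittleO_rpow_rpow_atTop ha1
  exact (isEquivalent_nat_ceil.comp_tendsto (tendsto_rpow_atTop ha0)).isBigO.trans_isLittleO
    rpow_isLittleO

theorem exists_lt_mul_sq {s t : ℝ} (ht : 0 < t) (hst : s < t) :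
    ∃ a : ℝ, 0 < a ∧ a < 1 ∧ s < t * a ^ 2 := by
  obtain ⟨q, hq, hq1⟩ := exists_between (max_lt one_pos ((div_lt_one ht).mpr hst))
  obtain ⟨hq0, hsq⟩ := max_lt_iff.mp hq
  refine ⟨√q, Real.sqrt_pos.mpr hq0, by rwa [Real.sqrt_lt' one_pos, one_pow], ?_⟩
  rwa [Real.sq_sqrt hq0.le, ← div_lt_iff₀' ht]

theorem count_cocomparability_graphs_ge_general (t : ℕ) (ht : 2 ≤ t) {s : ℝ} (hs : s < t) :
    ∀ᶠ n : ℕ in atTop,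
      (n : ℝ) ^ (s * n) ≤ ((cocompGraphsOfDimAtMost (Fin n) t).ncard : ℝ) := by
  have ht0 : (0 : ℝ) < t := by positivity
  obtain ⟨a, ha0, ha1, hsa⟩ := exists_lt_mul_sq ht0 hs
  have few_references := (((isLittleO_natCeil_rpow_id_atTop ha0 ha1).const_mul_left
    (t : ℝ)).natCast_atTop).bound (sub_pos.mpr ha1)
  filter_upwards [few_references, eventually_ge_atTop 1] with n hn hn1
  set m := ⌈(n : ℝ) ^ a⌉₊
  have : NeZero m := ⟨(Nat.ceil_pos.mpr (by positivity)).ne'⟩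
  have htm : (t * m : ℝ) ≤ (1 - a) * n := by simpa using hn
  obtain ⟨k, hk⟩ : ∃ k, n = t * m + k := by
    refine Nat.exists_eq_add_of_le ?_
    have : (t * m : ℝ) ≤ n := htm.trans (mul_le_of_le_one_left (by positivity) (by linarith))
    exact_mod_cast this
  have hnk : a * n ≤ k := by
    have : (n : ℝ) = t * m + k := by exact_mod_cast hk
    linarith
  have hexp : s * n ≤ a * (t * k : ℕ) := by
    calc s * n ≤ t * a ^ 2 * n := by gcongr
      _ = a * (t * (a * n)) := by ring
      _ ≤ a * (t * k : ℕ) := by push_cast; gcongr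
  calc (n : ℝ) ^ (s * n) ≤ (n : ℝ) ^ (a * (t * k : ℕ)) :=
        Real.rpow_le_rpow_of_exponent_le (by exact_mod_cast hn1) hexp
    _ = ((n : ℝ) ^ a) ^ (t * k) := by rw [Real.rpow_mul (by positivity), Real.rpow_natCast]
    _ ≤ (m : ℝ) ^ (t * k) := by gcongr; exact Nat.le_ceil _
    _ ≤ ((cocompGraphsOfDimAtMost (Fin n) t).ncard : ℝ) := by
        rw [hk]
        exact_mod_cast pow_le_ncard_cocompGraphsOfDimAtMost ht

/-- For every fixed `t ≥ 2`, the number of cocomparability graphs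
on `n` labeled vertices arising from posets of dimension at most `t` is at least
`n ^ ((t - 1 - o(1)) n)`: for every `ε > 0`, for all large enough `n` there are at
least `n ^ ((t - 1 - ε) n)` such graphs. -/
theorem count_cocomparability_graphs_ge (t : ℕ) (ht : 2 ≤ t) (ε : ℝ) (hε : 0 < ε) :
    ∃ N : ℕ, ∀ n : ℕ, N ≤ n →
      (n : ℝ) ^ (((t : ℝ) - 1 - ε) * n) ≤
        ({G : SimpleGraph (Fin n) | ∃ P : PartialOrder (Fin n),
            HasDimAtMost P t ∧ G = cocompGraph P}.ncard : ℝ) :=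
  eventually_atTop.mp (count_cocomparability_graphs_ge_general t ht (by linarith))
end
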